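/- (Lemma on the conditional law of V.) Let 1 ≤ s < n, let Σ ∈ ℝ^{p×p} be positive definite with ‖Σ_{S^c S}(Σ_SS)^{-1}‖_∞ ≤ 1 − ε for some ε ∈ (0,1], let the rows of X ∈ ℝ^{n×p} be i.i.d. N(0, Σ), and let W ∼ N(0, σ² I_n) be independent of X. Fix λ_n > 0 and b = sgn(β*_S). Then, conditioned on X_S and W, the random vector (V_j)_{j ∈ S^c} is Gaussian; its conditional mean satisfies |E[V_j | X_S, W]| ≤ λ_n (1 − ε) for every j ∈ S^c almost surely; and its conditional covariance matrix equals M_n · Σ_{(S^c|S)}, where Σ_{(S^c|S)} = Σ_{S^cS^c} − Σ_{S^cS}(Σ_SS)^{-1}Σ_{SS^c}. -/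

import Mathlib

/-!
Regress each row on its `S`-part: with `B = Σ_{S^c S} Σ_SS⁻¹`, block elimination turns `Σ` into the
block-diagonal matrix with blocks `Σ_SS` and the Schur complement `Σ_{(S^c|S)}`. Hence the residual
matrix `E = X_{S^c} - X_S Bᵀ` is independent of `X_S`, hence of `(X_S, W)`, and has i.i.d.
`N(0, Σ_{(S^c|S)})` rows (`row_split`, `rows_split`). All identities between Gaussian laws are read
off characteristic functions: the law of `A g`, with `g` standard, depends only on `A * Aᵀ`
(`charFunDual_linGauss`).

Put `z = X_S (X_SᵀX_S)⁻¹ λ b - (X_S (X_SᵀX_S)⁻¹ X_Sᵀ - I) (W/n)`, a function of `(X_S, W)`. Then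
`V = X_{S^c}ᵀ z = B X_Sᵀ z + Eᵀ z`, so by independence the conditional law of `V` is obtained by
freezing `(X_S, W)` and integrating over `E` (`condDistrib_of_indep`). It is Gaussian with mean
`B X_Sᵀ z` and covariance `(z ⬝ᵥ z) • Σ_{(S^c|S)}` (`isGaussianMeanCov_comb`). When `X_SᵀX_S` is
invertible, `X_Sᵀ z = λ b`, so the incoherence condition bounds the mean by `λ (1 - ε)`, and
Pythagoras gives `z ⬝ᵥ z = M_n` (`zvec_dotProduct_self`).

Invertibility holds almost surely (`ae_isUnit_gram`): a nondegenerate Gaussian law charges no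
proper subspace, so the rows of `X_S`, added one at a time, are linearly independent until they
span.
-/

open MeasureTheory ProbabilityTheory Matrix Filter

/-- The sign function, `sgn t ∈ {-1, 0, 1}`. -/
noncomputable def sgn (t : ℝ) : ℝ := if 0 < t then 1 else if t < 0 then -1 else 0

/-- The standard Gaussian measure on `ι → ℝ`: i.i.d. standard normal coordinates. -/
noncomputable def stdGaussian (ι : Type*) [Fintype ι] : Measure (ι → ℝ) :=
  Measure.pi (fun _ : ι => gaussianReal 0 1)

/-- `μ` is the law of a Gaussian vector with mean `m` and covariance matrix `C`. -/
def IsGaussianMeanCov {ι : Type*} [Fintype ι] [DecidableEq ι]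
    (μ : Measure (ι → ℝ)) (m : ι → ℝ) (C : Matrix ι ι ℝ) : Prop :=
  ∃ A : Matrix ι ι ℝ, A * Aᵀ = C ∧
    μ = (stdGaussian ι).map (fun g => m + A.mulVec g)

/-- `μ` is the law of a centered Gaussian vector with covariance matrix `C`. -/
def IsCenteredGaussianCov {ι : Type*} [Fintype ι] [DecidableEq ι]
    (μ : Measure (ι → ℝ)) (C : Matrix ι ι ℝ) : Prop :=
  IsGaussianMeanCov μ 0 C

/-- The law of `X : Ω → Fin n → ι → ℝ` is that of `n` i.i.d. rows, each centered Gaussian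
with covariance `C`. -/
def HasIIDGaussianRows {Ω : Type*} [MeasurableSpace Ω] (P : Measure Ω)
    {n : ℕ} {ι : Type*} [Fintype ι] [DecidableEq ι]
    (X : Ω → Fin n → ι → ℝ) (C : Matrix ι ι ℝ) : Prop :=
  ∃ ρ : Measure (ι → ℝ), IsCenteredGaussianCov ρ C ∧
    Measure.map X P = Measure.pi (fun _ : Fin n => ρ)

/-- The random scaling factor `M_n` from the paper. -/
noncomputable def Mfac {n : ℕ} {ι : Type*} [Fintype ι] [DecidableEq ι]
    (lam : ℝ) (b : ι → ℝ) (A : Matrix (Fin n) ι ℝ) (w : Fin n → ℝ) : ℝ :=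
  lam ^ 2 * (b ⬝ᵥ (Aᵀ * A)⁻¹.mulVec b) +
    (1 / (n : ℝ) ^ 2) *
      (w ⬝ᵥ ((1 : Matrix (Fin n) (Fin n) ℝ) - A * (Aᵀ * A)⁻¹ * Aᵀ).mulVec w)


/-! ### Linear images of standard Gaussian vectors -/

/-- The law of `A g` for a standard Gaussian vector `g`, i.e. the centered Gaussian law with
covariance matrix `A * Aᵀ`; `A` is allowed to be rectangular. -/
noncomputable def linGauss {ι κ : Type*} [Fintype κ] (A : Matrix ι κ ℝ) : Measure (ι → ℝ) :=
  (_root_.stdGaussian κ).map (fun g => A.mulVec g)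

instance {ι : Type*} [Fintype ι] : IsProbabilityMeasure (_root_.stdGaussian ι) := by
  unfold _root_.stdGaussian; infer_instance

lemma measurable_mulVec {ι κ : Type*} [Fintype κ] (A : Matrix ι κ ℝ) :
    Measurable (fun g : κ → ℝ => A.mulVec g) := by
  unfold Matrix.mulVec dotProduct
  fun_prop

instance {ι κ : Type*} [Fintype κ] (A : Matrix ι κ ℝ) : IsProbabilityMeasure (linGauss A) :=
  Measure.isProbabilityMeasure_map (measurable_mulVec A).aemeasurable

lemma charFunDual_std {κ : Type*} [Fintype κ] [DecidableEq κ] (L : StrongDual ℝ (κ → ℝ)) :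
    charFunDual (_root_.stdGaussian κ) L =
      Complex.exp (-((∑ i, (L (Pi.single i 1)) ^ 2 : ℝ) : ℂ) / 2) := by
  unfold _root_.stdGaussian
  rw [charFunDual_pi]
  have h : ∀ i, charFunDual (gaussianReal 0 1) (L.comp (.single ℝ (fun _ : κ => ℝ) i)) =
      Complex.exp (-((L (Pi.single i 1) : ℝ) : ℂ) ^ 2 / 2) := by
    intro i
    rw [charFunDual_eq_charFun_map_one]
    have : (gaussianReal 0 1).map (L.comp (.single ℝ (fun _ : κ => ℝ) i)) =
        (gaussianReal 0 1).map (fun x => (L (Pi.single i 1)) * x) := by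
      congr 1
      ext x
      have : (Pi.single i x : κ → ℝ) = x • Pi.single i 1 := by
        rw [← Pi.single_smul]; simp
      simp [this, mul_comm]
    rw [this, gaussianReal_map_const_mul, charFun_gaussianReal]
    simp [neg_div]
  simp_rw [h]
  rw [← Complex.exp_sum]
  congr 1
  push_cast
  rw [← Finset.sum_neg_distrib, Finset.sum_div]

/-- The vector representing a linear functional on `ι → ℝ`. -/
noncomputable def dualVec {ι : Type*} [Fintype ι] [DecidableEq ι]
    (L : StrongDual ℝ (ι → ℝ)) : ι → ℝ :=
  fun i => L (Pi.single i 1)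

lemma dual_apply {ι : Type*} [Fintype ι] [DecidableEq ι] (L : StrongDual ℝ (ι → ℝ))
    (x : ι → ℝ) : L x = dualVec L ⬝ᵥ x := by
  conv_lhs => rw [pi_eq_sum_univ' x]
  simp [dualVec, dotProduct, mul_comm]

/-- The characteristic function of `linGauss A` depends on `A` only through `A * Aᵀ`. -/
lemma charFunDual_linGauss {ι κ : Type*} [Fintype κ] [Fintype ι] [DecidableEq ι]
    (A : Matrix ι κ ℝ) (L : StrongDual ℝ (ι → ℝ)) :
    charFunDual (linGauss A) L =
      Complex.exp (-((dualVec L ⬝ᵥ (A * Aᵀ).mulVec (dualVec L) : ℝ) : ℂ) / 2) := by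
  classical
  have h : linGauss A = (_root_.stdGaussian κ).map (A.mulVecLin.toContinuousLinearMap) := rfl
  rw [h, charFunDual_map, charFunDual_std]
  congr 4
  have h2 : ∀ i, (L.comp A.mulVecLin.toContinuousLinearMap) (Pi.single i 1) =
      (Aᵀ.mulVec (dualVec L)) i := by
    intro i
    simp [dual_apply, Matrix.mulVec, dotProduct, mul_comm]
  simp_rw [h2]
  rw [← Matrix.mulVec_mulVec, Matrix.dotProduct_mulVec, ← Matrix.mulVec_transpose]
  simp [dotProduct, sq]

lemma linGauss_eq {ι κ κ' : Type*} [Fintype κ] [Fintype κ'] [Fintype ι] [DecidableEq ι]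
    (A : Matrix ι κ ℝ) (B : Matrix ι κ' ℝ) (h : A * Aᵀ = B * Bᵀ) :
    linGauss A = linGauss B := by
  apply Measure.ext_of_charFunDual
  ext L
  rw [charFunDual_linGauss, charFunDual_linGauss, h]

lemma linGauss_map {ι ι' κ : Type*} [Fintype κ] [Fintype ι]
    (A : Matrix ι κ ℝ) (T : Matrix ι' ι ℝ) :
    (linGauss A).map (fun x => T.mulVec x) = linGauss (T * A) := by
  unfold linGauss
  rw [Measure.map_map (measurable_mulVec T) (measurable_mulVec A)]
  congr 1
  ext g
  simp [Matrix.mulVec_mulVec]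

/-- A block-diagonal linear image of a standard Gaussian vector has independent blocks. -/
lemma linGauss_blockDiag {ι ι' κ κ' : Type*} [Fintype κ] [Fintype κ']
    (A : Matrix ι κ ℝ) (D : Matrix ι' κ' ℝ) :
    (linGauss (Matrix.fromBlocks A 0 0 D)).map
      (fun x => ((fun i => x (Sum.inl i)), (fun j => x (Sum.inr j)))) =
    (linGauss A).prod (linGauss D) := by
  unfold linGauss
  rw [Measure.map_map (by fun_prop) (measurable_mulVec _)]
  have hp := measurePreserving_sumPiEquivProdPi (X := fun _ : κ ⊕ κ' => ℝ)
    (fun _ => gaussianReal 0 1)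
  have h1 : (_root_.stdGaussian κ).prod (_root_.stdGaussian κ') =
    (_root_.stdGaussian (κ ⊕ κ')).map (MeasurableEquiv.sumPiEquivProdPi _) := hp.map_eq.symm
  rw [Measure.map_prod_map _ _ (measurable_mulVec A) (measurable_mulVec D), h1,
    Measure.map_map ?_ (MeasurableEquiv.measurable _)]
  · congr 1
    ext x i
    · simp [Matrix.mulVec, dotProduct, MeasurableEquiv.sumPiEquivProdPi, Equiv.sumPiEquivProdPi]
    · simp [Matrix.mulVec, dotProduct, MeasurableEquiv.sumPiEquivProdPi, Equiv.sumPiEquivProdPi]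
  · exact (measurable_mulVec A).prodMap (measurable_mulVec D)

lemma exists_sqrt {ι : Type*} [Fintype ι] [DecidableEq ι] {C : Matrix ι ι ℝ}
    (hC : C.PosSemidef) : ∃ D : Matrix ι ι ℝ, D * Dᵀ = C := by
  open scoped MatrixOrder in
  have h1 := CFC.sqrt_mul_sqrt_self C hC.nonneg
  have h2 : (CFC.sqrt C)ᴴ = CFC.sqrt C := (CFC.sqrt_nonneg C).isSelfAdjoint
  rw [Matrix.conjTranspose_eq_transpose_of_trivial] at h2
  exact ⟨CFC.sqrt C, by rw [h2, h1]⟩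

/-- For i.i.d. rows `e_k` with law `linGauss D`, the vector `m + ∑ z_k e_k` is Gaussian with mean
`m` and covariance `(z ⬝ᵥ z) • (D * Dᵀ)`. -/
lemma isGaussianMeanCov_comb {n : ℕ} {ι κ : Type*} [Fintype κ] [Fintype ι] [DecidableEq ι]
    (D : Matrix ι κ ℝ) (z : Fin n → ℝ) (m : ι → ℝ) :
    IsGaussianMeanCov
      ((Measure.pi (fun _ : Fin n => linGauss D)).map (fun e => m + ∑ k, z k • e k)) m
      ((z ⬝ᵥ z) • (D * Dᵀ)) := by
  have hps : ((z ⬝ᵥ z) • (D * Dᵀ)).PosSemidef := by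
    refine Matrix.PosSemidef.smul ?_ (dotProduct_self_star_nonneg z)
    have := Matrix.posSemidef_self_mul_conjTranspose D
    rwa [Matrix.conjTranspose_eq_transpose_of_trivial] at this
  obtain ⟨A, hA⟩ := exists_sqrt hps
  refine ⟨A, hA, ?_⟩
  let T : (Fin n → ι → ℝ) →L[ℝ] (ι → ℝ) :=
    ∑ k, z k • ContinuousLinearMap.proj (R := ℝ) (φ := fun _ : Fin n => ι → ℝ) k
  have hT : ∀ e, T e = ∑ k, z k • e k := by intro e; simp [T]
  have key : (Measure.pi (fun _ : Fin n => linGauss D)).map T = linGauss A := by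
    apply Measure.ext_of_charFunDual
    ext L
    rw [charFunDual_map, charFunDual_pi, charFunDual_linGauss, hA]
    have h : ∀ k : Fin n, dualVec
        ((L.comp T).comp (.single ℝ (fun _ : Fin n => ι → ℝ) k)) = z k • dualVec L := by
      intro k
      ext i
      simp [dualVec, hT, Pi.single_apply, apply_ite]
    simp_rw [charFunDual_linGauss, h]
    rw [← Complex.exp_sum]
    congr 1
    simp only [Matrix.mulVec_smul, smul_dotProduct, dotProduct_smul, Matrix.smul_mulVec,
      smul_eq_mul]
    rw [← Finset.sum_div, Finset.sum_neg_distrib]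
    congr 2
    push_cast [dotProduct]
    rw [Finset.sum_mul]
    exact Finset.sum_congr rfl fun k _ => by ring
  have h1 : (fun e : Fin n → ι → ℝ => m + ∑ k, z k • e k) = (fun x => m + x) ∘ T := by
    ext e; simp [hT]
  rw [h1, ← Measure.map_map (by fun_prop) (by fun_prop), key, linGauss,
    Measure.map_map (by fun_prop) (measurable_mulVec A)]
  rfl

/-! ### Almost sure invertibility of the Gram matrix -/

/-- A proper subspace is null for a nondegenerate Gaussian law: it lies in the kernel of a nonzero
functional, whose law is a nondegenerate real Gaussian. -/
lemma linGauss_submodule {ι κ : Type*} [Fintype κ] [Fintype ι] [DecidableEq ι]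
    (A : Matrix ι κ ℝ) (hA : (A * Aᵀ).PosDef) (p : Submodule ℝ (ι → ℝ)) (hp : p < ⊤) :
    linGauss A p = 0 := by
  obtain ⟨f, hf0, hfp⟩ := Submodule.exists_le_ker_of_lt_top p hp
  let L : StrongDual ℝ (ι → ℝ) := f.toContinuousLinearMap
  have hL0 : dualVec L ≠ 0 := by
    intro h
    apply hf0
    refine LinearMap.ext fun x => ?_
    have := dual_apply L x
    rw [h] at this
    simp only [zero_dotProduct] at this
    simpa [L] using this
  have hv : 0 < dualVec L ⬝ᵥ (A * Aᵀ).mulVec (dualVec L) := by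
    simpa using hA.dotProduct_mulVec_pos hL0
  set v := dualVec L ⬝ᵥ (A * Aᵀ).mulVec (dualVec L) with hvdef
  have hlaw : (linGauss A).map L = gaussianReal 0 v.toNNReal := by
    have : IsFiniteMeasure ((linGauss A).map L) := inferInstance
    apply Measure.ext_of_charFun
    ext u
    rw [charFun_map_eq_charFunDual_smul, charFunDual_linGauss, charFun_gaussianReal]
    have : dualVec (u • L) = u • dualVec L := by ext i; simp [dualVec]
    rw [this]
    simp only [Matrix.mulVec_smul, smul_dotProduct, dotProduct_smul, smul_eq_mul, ← hvdef]
    congr 1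
    rw [Real.coe_toNNReal _ hv.le]
    push_cast
    ring
  have hna : NullSingletonClass (gaussianReal 0 v.toNNReal) :=
    nullSingletonClass_gaussianReal (by simpa using hv)
  refine measure_mono_null (t := L ⁻¹' {0}) ?_ ?_
  · intro x hx
    have := hfp hx
    simpa [L] using this
  · rw [← Measure.map_apply (by fun_prop) (measurableSet_singleton 0), hlaw]
    exact measure_singleton 0

/-- Given `k < card ι` rows, the next row is independent of them and almost surely avoids their
span, a proper subspace. -/
lemma ae_linearIndependent {ι : Type*} [Fintype ι]
    (ρ : Measure (ι → ℝ)) [IsProbabilityMeasure ρ]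
    (hρ : ∀ p : Submodule ℝ (ι → ℝ), p < ⊤ → ρ p = 0) (k : ℕ) (hk : k ≤ Fintype.card ι) :
    ∀ᵐ x ∂(Measure.pi (fun _ : Fin k => ρ)), LinearIndependent ℝ x := by
  induction k with
  | zero => exact Filter.Eventually.of_forall fun x => linearIndependent_empty_type
  | succ k ih =>
    have ih := ih (by omega)
    have hmp := measurePreserving_piFinSuccAbove (fun _ : Fin (k + 1) => ρ) 0
    -- The new row comes second here, so that Fubini fixes the first `k` rows.
    have hswap : ∀ᵐ q ∂((Measure.pi (fun _ : Fin k => ρ)).prod ρ),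
        LinearIndependent ℝ (Fin.cons q.2 q.1 : Fin (k + 1) → ι → ℝ) := by
      have hmeas : MeasurableSet {q : (Fin k → ι → ℝ) × (ι → ℝ) |
          LinearIndependent ℝ (Fin.cons q.2 q.1 : Fin (k + 1) → ι → ℝ)} := by
        have ho := isOpen_setOfPred_linearIndependent (𝕜 := ℝ) (E := ι → ℝ) (ι := Fin (k + 1))
        refine ho.measurableSet.preimage (f := fun q : (Fin k → ι → ℝ) × (ι → ℝ) =>
          (Fin.cons q.2 q.1 : Fin (k + 1) → ι → ℝ)) ?_
        rw [measurable_pi_iff]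
        intro i
        refine Fin.cases ?_ (fun j => ?_) i
        · simpa using measurable_snd
        · simp only [Fin.cons_succ]
          fun_prop
      rw [Measure.ae_prod_iff_ae_ae hmeas]
      filter_upwards [ih] with v hv
      have hlt : Submodule.span ℝ (Set.range v) < ⊤ := by
        rw [lt_top_iff_ne_top]
        intro h
        have h1 := finrank_range_le_card (R := ℝ) v
        rw [Set.finrank, h, finrank_top, Module.finrank_fintype_fun_eq_card,
          Fintype.card_fin] at h1
        omega
      have := hρ _ hlt
      rw [measure_eq_zero_iff_ae_notMem] at this
      filter_upwards [this] with x hx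
      exact linearIndependent_finCons.2 ⟨hv, hx⟩
    have h2 : ∀ᵐ q ∂(ρ.prod (Measure.pi (fun _ : Fin k => ρ))),
        LinearIndependent ℝ (Fin.cons q.1 q.2 : Fin (k + 1) → ι → ℝ) :=
      (Measure.measurePreserving_swap (μ := ρ)
        (ν := Measure.pi (fun _ : Fin k => ρ))).quasiMeasurePreserving.ae hswap
    have h3 := hmp.quasiMeasurePreserving.ae h2
    filter_upwards [h3] with x hx
    have : (Fin.cons ((MeasurableEquiv.piFinSuccAbove (fun _ : Fin (k + 1) => ι → ℝ) 0) x).1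
        ((MeasurableEquiv.piFinSuccAbove (fun _ : Fin (k + 1) => ι → ℝ) 0) x).2 :
          Fin (k + 1) → ι → ℝ) = x := by
      ext i
      refine Fin.cases ?_ (fun j => ?_) i <;>
        simp [MeasurableEquiv.piFinSuccAbove, Fin.insertNthEquiv, Fin.tail]
    rwa [this] at hx

lemma ae_exists_linearIndependent {ι : Type*} [Fintype ι]
    (ρ : Measure (ι → ℝ)) [IsProbabilityMeasure ρ]
    (hρ : ∀ p : Submodule ℝ (ι → ℝ), p < ⊤ → ρ p = 0) (d : ℕ) :
    ∀ᵐ x ∂(Measure.pi (fun _ : Fin (Fintype.card ι + d) => ρ)),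
      ∃ f : Fin (Fintype.card ι) → Fin (Fintype.card ι + d), LinearIndependent ℝ (x ∘ f) := by
  induction d with
  | zero =>
    filter_upwards [ae_linearIndependent ρ hρ _ le_rfl] with x hx
    exact ⟨id, hx⟩
  | succ d ih =>
    have hmp := measurePreserving_piFinSuccAbove (fun _ : Fin (Fintype.card ι + d + 1) => ρ) 0
    have h3 := (Measure.quasiMeasurePreserving_snd.comp hmp.quasiMeasurePreserving).ae ih
    filter_upwards [h3] with x hx
    obtain ⟨f, hf⟩ := hx
    refine ⟨fun i => (f i).succ, ?_⟩
    convert! hf using 1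

/-- With at least as many rows as columns, the Gram matrix of i.i.d. rows charging no proper
subspace is almost surely invertible: `card ι` of the rows are linearly independent, so only `0`
is orthogonal to all of them. -/
lemma ae_isUnit_gram {ι : Type*} [Fintype ι] [DecidableEq ι] {n : ℕ}
    (ρ : Measure (ι → ℝ)) [IsProbabilityMeasure ρ]
    (hρ : ∀ p : Submodule ℝ (ι → ℝ), p < ⊤ → ρ p = 0) (hn : Fintype.card ι ≤ n) :
    ∀ᵐ x ∂(Measure.pi (fun _ : Fin n => ρ)),
      IsUnit ((Matrix.of x)ᵀ * Matrix.of x).det := by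
  obtain ⟨d, rfl⟩ := Nat.exists_eq_add_of_le hn
  filter_upwards [ae_exists_linearIndependent ρ hρ d] with x hx
  obtain ⟨f, hf⟩ := hx
  have hinj : Function.Injective (Matrix.of x).mulVec := by
    rw [← Matrix.coe_mulVecLin, ← LinearMap.ker_eq_bot, LinearMap.ker_eq_bot']
    intro v hv
    have hspan := hf.span_eq_top_of_card_eq_finrank' (by simp)
    have hmem : v ∈ Submodule.span ℝ (Set.range (x ∘ f)) := by rw [hspan]; trivial
    have : ∀ y ∈ Submodule.span ℝ (Set.range (x ∘ f)), y ⬝ᵥ v = 0 := by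
      intro y hy
      induction hy using Submodule.span_induction with
      | mem y hy =>
        obtain ⟨i, rfl⟩ := hy
        exact congrFun hv (f i)
      | zero => simp
      | add a b _ _ ha hb => rw [add_dotProduct, ha, hb, add_zero]
      | smul c a _ ha => rw [smul_dotProduct, ha, smul_zero]
    exact dotProduct_self_eq_zero.1 (this v hmem)
  have hpd := Matrix.PosDef.conjTranspose_mul_self (Matrix.of x) hinj
  rw [Matrix.conjTranspose_eq_transpose_of_trivial] at hpd
  exact hpd.det_pos.ne'.isUnit

/-! ### Regression of the rows on `S` -/

/-- Block elimination: `T Σ Tᵀ` is block diagonal with the Schur complement in its last block. -/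
lemma block_elim {a b : Type*} [Fintype a] [Fintype b] [DecidableEq a] [DecidableEq b]
    (Pm : Matrix a a ℝ) (R : Matrix b b ℝ) (Q : Matrix a b ℝ)
    (hP : IsUnit Pm.det) (hsymm : Pmᵀ = Pm) :
    Matrix.fromBlocks 1 0 (-(Qᵀ * Pm⁻¹)) 1 * Matrix.fromBlocks Pm Q Qᵀ R *
      (Matrix.fromBlocks 1 0 (-(Qᵀ * Pm⁻¹)) 1)ᵀ =
    Matrix.fromBlocks Pm 0 0 (R - Qᵀ * Pm⁻¹ * Q) := by
  have h1 : Pm⁻¹ * Pm = 1 := Matrix.nonsing_inv_mul _ hP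
  have h2 : Pm * Pm⁻¹ = 1 := Matrix.mul_nonsing_inv _ hP
  have h3 : (Pm⁻¹)ᵀ = Pm⁻¹ := by rw [Matrix.transpose_nonsing_inv, hsymm]
  have h4 : Qᵀ * Pm⁻¹ * Pm = Qᵀ := by rw [Matrix.mul_assoc, h1, Matrix.mul_one]
  have h5 : Pm * (Pm⁻¹ * Q) = Q := by rw [← Matrix.mul_assoc, h2, Matrix.one_mul]
  rw [Matrix.fromBlocks_transpose, Matrix.fromBlocks_multiply, Matrix.fromBlocks_multiply]
  simp [h3, h4, h5, Matrix.transpose_mul, sub_eq_neg_add]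

/-- The regression decomposition of one row: `x_S` and the residual
`x_{S^c} - Σ_{S^c S} Σ_SS⁻¹ x_S` are independent Gaussian vectors. -/
lemma row_split {p : ℕ} (Sfin : Finset (Fin p)) (Sig : Matrix (Fin p) (Fin p) ℝ)
    (hpd : Sig.PosDef) (A0 : Matrix (Fin p) (Fin p) ℝ) (hA0 : A0 * A0ᵀ = Sig) :
    ∃ (L : Matrix {i : Fin p // i ∈ Sfin} {i : Fin p // i ∈ Sfin} ℝ)
      (D : Matrix {i : Fin p // i ∉ Sfin} {i : Fin p // i ∉ Sfin} ℝ),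
      L * Lᵀ = Sig.submatrix (Subtype.val : {i : Fin p // i ∈ Sfin} → Fin p)
            (Subtype.val : {i : Fin p // i ∈ Sfin} → Fin p) ∧
      D * Dᵀ = Sig.submatrix (Subtype.val : {i : Fin p // i ∉ Sfin} → Fin p)
            (Subtype.val : {i : Fin p // i ∉ Sfin} → Fin p) -
        Sig.submatrix (Subtype.val : {i : Fin p // i ∉ Sfin} → Fin p)
            (Subtype.val : {i : Fin p // i ∈ Sfin} → Fin p) *
          (Sig.submatrix (Subtype.val : {i : Fin p // i ∈ Sfin} → Fin p)
            (Subtype.val : {i : Fin p // i ∈ Sfin} → Fin p))⁻¹ *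
          Sig.submatrix (Subtype.val : {i : Fin p // i ∈ Sfin} → Fin p)
            (Subtype.val : {i : Fin p // i ∉ Sfin} → Fin p) ∧
      (linGauss A0).map (fun x : Fin p → ℝ =>
        ((fun i : {i : Fin p // i ∈ Sfin} => x i.1),
          (fun j : {i : Fin p // i ∉ Sfin} => x j.1 -
            (Sig.submatrix (Subtype.val : {i : Fin p // i ∉ Sfin} → Fin p)
              (Subtype.val : {i : Fin p // i ∈ Sfin} → Fin p) *
            (Sig.submatrix (Subtype.val : {i : Fin p // i ∈ Sfin} → Fin p)
              (Subtype.val : {i : Fin p // i ∈ Sfin} → Fin p))⁻¹).mulVec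
                (fun i : {i : Fin p // i ∈ Sfin} => x i.1) j))) =
      (linGauss L).prod (linGauss D) := by
  set Pm := Sig.submatrix (Subtype.val : {i : Fin p // i ∈ Sfin} → Fin p)
    (Subtype.val : {i : Fin p // i ∈ Sfin} → Fin p) with hPm
  set R := Sig.submatrix (Subtype.val : {i : Fin p // i ∉ Sfin} → Fin p)
    (Subtype.val : {i : Fin p // i ∉ Sfin} → Fin p) with hR
  set Q := Sig.submatrix (Subtype.val : {i : Fin p // i ∈ Sfin} → Fin p)
    (Subtype.val : {i : Fin p // i ∉ Sfin} → Fin p) with hQ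
  have hsym : Sigᵀ = Sig := by
    have := hpd.isHermitian
    rwa [Matrix.IsHermitian, Matrix.conjTranspose_eq_transpose_of_trivial] at this
  have hQt : Sig.submatrix (Subtype.val : {i : Fin p // i ∉ Sfin} → Fin p)
      (Subtype.val : {i : Fin p // i ∈ Sfin} → Fin p) = Qᵀ := by
    rw [hQ, Matrix.transpose_submatrix, hsym]
  rw [hQt]
  have hPpd : Pm.PosDef := hpd.submatrix Subtype.val_injective
  have hPsym : Pmᵀ = Pm := by rw [hPm, Matrix.transpose_submatrix, hsym]
  let e : {i : Fin p // i ∈ Sfin} ⊕ {i : Fin p // i ∉ Sfin} ≃ Fin p :=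
    Equiv.sumCompl (· ∈ Sfin)
  let T0 : Matrix ({i : Fin p // i ∈ Sfin} ⊕ {i : Fin p // i ∉ Sfin})
      ({i : Fin p // i ∈ Sfin} ⊕ {i : Fin p // i ∉ Sfin}) ℝ :=
    Matrix.fromBlocks 1 0 (-(Qᵀ * Pm⁻¹)) 1
  let T := T0.submatrix id e.symm
  have hblock : Sig.submatrix e e = Matrix.fromBlocks Pm Q Qᵀ R := by
    rw [← hQt]
    ext i j
    rcases i with i | i <;> rcases j with j | j <;> rfl
  have hSig : Sig = (Matrix.fromBlocks Pm Q Qᵀ R).submatrix e.symm e.symm := by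
    rw [← hblock]; simp
  have helim := block_elim Pm R Q hPpd.det_pos.ne'.isUnit hPsym
  have hcov : T * A0 * (T * A0)ᵀ = Matrix.fromBlocks Pm 0 0 (R - Qᵀ * Pm⁻¹ * Q) := by
    have h1 : T * A0 * (T * A0)ᵀ = T * Sig * Tᵀ := by
      rw [Matrix.transpose_mul, ← hA0]; simp only [Matrix.mul_assoc]
    rw [h1, ← helim]
    conv_lhs => rw [hSig]
    simp only [T, Matrix.transpose_submatrix]
    rw [Matrix.submatrix_mul_equiv, Matrix.submatrix_mul_equiv, Matrix.submatrix_id_id]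
  have hps : (Matrix.fromBlocks Pm 0 0 (R - Qᵀ * Pm⁻¹ * Q)).PosSemidef := by
    rw [← hcov]
    have := Matrix.posSemidef_self_mul_conjTranspose (T * A0)
    rwa [Matrix.conjTranspose_eq_transpose_of_trivial] at this
  obtain ⟨L, hL⟩ := exists_sqrt hPpd.posSemidef
  obtain ⟨D, hD⟩ := exists_sqrt (C := R - Qᵀ * Pm⁻¹ * Q) (by
    have := hps.submatrix (Sum.inr : {i : Fin p // i ∉ Sfin} → _)
    exact this)
  refine ⟨L, D, hL, hD, ?_⟩
  have hlaw : linGauss (T * A0) = linGauss (Matrix.fromBlocks L 0 0 D) := by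
    apply linGauss_eq
    rw [hcov, Matrix.fromBlocks_transpose, Matrix.fromBlocks_multiply]
    simp [hL, hD]
  rw [← linGauss_blockDiag, ← hlaw, ← linGauss_map,
    Measure.map_map (by fun_prop) (measurable_mulVec T)]
  congr 1
  have hTx : ∀ x : Fin p → ℝ, T.mulVec x = T0.mulVec (x ∘ e) := by
    intro x
    ext i
    simp only [Matrix.mulVec, dotProduct, T, Matrix.submatrix_apply, id]
    rw [← e.sum_comp]
    simp
  funext x
  simp only [Function.comp, hTx]
  ext i
  · simp [T0, Matrix.mulVec, dotProduct, Matrix.one_apply, e]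
  · simp [T0, Matrix.mulVec, dotProduct, Matrix.one_apply, e, sub_eq_neg_add]

/-- If `f` and `g` split one row into independent parts, then they split a matrix with i.i.d. rows
into two independent matrices with i.i.d. rows. -/
lemma rows_split {a b c : Type*} [MeasurableSpace a] [MeasurableSpace b] [MeasurableSpace c]
    {n : ℕ} (ρ : Measure a) [IsProbabilityMeasure ρ] (μ : Measure b) [IsProbabilityMeasure μ]
    (ν : Measure c) [IsProbabilityMeasure ν] (f : a → b) (g : a → c) (hf : Measurable f)
    (hg : Measurable g) (h : ρ.map (fun x => (f x, g x)) = μ.prod ν) :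
    (Measure.pi (fun _ : Fin n => ρ)).map (fun x => ((fun k => f (x k)), (fun k => g (x k)))) =
      (Measure.pi (fun _ : Fin n => μ)).prod (Measure.pi (fun _ : Fin n => ν)) := by
  have h1 := (measurePreserving_arrowProdEquivProdArrow b c (Fin n) (fun _ => μ)
    (fun _ => ν)).map_eq
  have : SigmaFinite (ρ.map (fun x => (f x, g x))) := by rw [h]; infer_instance
  have h2 := Measure.pi_map_pi (μ := fun _ : Fin n => ρ) (f := fun _ x => (f x, g x))
    (fun _ => (hf.prodMk hg).aemeasurable)
  simp only [h] at h2
  rw [← h1, ← h2, Measure.map_map (MeasurableEquiv.measurable _) (by fun_prop)]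
  rfl

/-- Freezing: if `E` is independent of `Y`, the conditional law of `Φ (Y, E)` given `Y = y` is the
law of `Φ (y, E)`. -/
lemma condDistrib_of_indep {Ω β γ δ : Type*} [MeasurableSpace Ω] [MeasurableSpace β]
    [MeasurableSpace γ] [MeasurableSpace δ] [StandardBorelSpace δ] [Nonempty δ]
    (P : Measure Ω) [IsProbabilityMeasure P] (Y : Ω → β) (hY : Measurable Y)
    (E : Ω → γ) (hE : Measurable E)
    (hind : P.map (fun ω => (Y ω, E ω)) = (P.map Y).prod (P.map E))
    (Φ : β × γ → δ) (hΦ : Measurable Φ) :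
    ∀ᵐ y ∂(P.map Y), condDistrib (fun ω => Φ (Y ω, E ω)) Y P y =
      (P.map E).map (fun e => Φ (y, e)) := by
  have hp1 : IsProbabilityMeasure (P.map E) := Measure.isProbabilityMeasure_map hE.aemeasurable
  have hp2 : IsProbabilityMeasure (P.map Y) := Measure.isProbabilityMeasure_map hY.aemeasurable
  let κ : Kernel β δ := ((Kernel.id : Kernel β β) ×ₖ Kernel.const β (P.map E)).map Φ
  have hκ : ∀ y, κ y = (P.map E).map (fun e => Φ (y, e)) := by
    intro y
    rw [Kernel.map_apply _ hΦ, Kernel.prod_apply, Kernel.id_apply, Kernel.const_apply,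
      Measure.dirac_prod, Measure.map_map hΦ (by fun_prop)]
    rfl
  have : IsMarkovKernel κ := Kernel.IsMarkovKernel.map _ hΦ
  have hmain : P.map (fun ω => (Y ω, Φ (Y ω, E ω))) = P.map Y ⊗ₘ κ := by
    have hm : Measurable (fun q : β × γ => (q.1, Φ q)) := measurable_fst.prodMk hΦ
    have h1 : P.map (fun ω => (Y ω, Φ (Y ω, E ω))) =
        ((P.map Y).prod (P.map E)).map (fun q : β × γ => (q.1, Φ q)) := by
      rw [← hind, Measure.map_map hm (hY.prodMk hE)]
      rfl
    rw [h1]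
    ext s hs
    rw [Measure.map_apply hm hs, Measure.prod_apply (hm hs), Measure.compProd_apply hs]
    refine lintegral_congr fun y => ?_
    rw [hκ, Measure.map_apply (by fun_prop) (measurable_prodMk_left hs)]
    rfl
  have := condDistrib_ae_eq_of_measure_eq_compProd Y
    (hΦ.comp (hY.prodMk hE)).aemeasurable hmain
  filter_upwards [this] with y hy
  rw [← hκ]
  exact hy

lemma prod_rearrange {a b c : Type*} [MeasurableSpace a] [MeasurableSpace b] [MeasurableSpace c]
    (μ : Measure a) [IsProbabilityMeasure μ] (ν : Measure b) [IsProbabilityMeasure ν]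
    (τ : Measure c) [IsProbabilityMeasure τ] :
    ((μ.prod ν).prod τ).map (fun q => ((q.1.1, q.2), q.1.2)) = (μ.prod τ).prod ν := by
  have h1 := measurePreserving_prodAssoc μ ν τ
  have h2 := (MeasurePreserving.id μ).prod (Measure.measurePreserving_swap (μ := ν) (ν := τ))
  have h3 := (measurePreserving_prodAssoc μ τ ν).symm
  exact (h3.comp (h2.comp h1)).map_eq

/-! ### The vector `z` -/

/-- The vector `z = X_S (X_SᵀX_S)⁻¹ λ b - (X_S (X_SᵀX_S)⁻¹ X_Sᵀ - I) (W/n)`, for which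
`V = X_{S^c}ᵀ z`. -/
noncomputable def zvec {n : ℕ} {ι : Type*} [Fintype ι] [DecidableEq ι]
    (lam : ℝ) (b : ι → ℝ) (A : Matrix (Fin n) ι ℝ) (w : Fin n → ℝ) : Fin n → ℝ :=
  (A * (Aᵀ * A)⁻¹).mulVec (lam • b) - (A * (Aᵀ * A)⁻¹ * Aᵀ - 1).mulVec ((1 / (n : ℝ)) • w)

lemma transpose_mulVec_zvec {n : ℕ} {ι : Type*} [Fintype ι] [DecidableEq ι]
    (lam : ℝ) (b : ι → ℝ) (A : Matrix (Fin n) ι ℝ) (w : Fin n → ℝ)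
    (hA : IsUnit (Aᵀ * A).det) : Aᵀ.mulVec (zvec lam b A w) = lam • b := by
  have h2 : Aᵀ * A * (Aᵀ * A)⁻¹ = 1 := Matrix.mul_nonsing_inv _ hA
  have h3 : Aᵀ * (A * (Aᵀ * A)⁻¹) = 1 := by rw [← Matrix.mul_assoc, h2]
  unfold zvec
  rw [Matrix.mulVec_sub, Matrix.mulVec_mulVec, Matrix.mulVec_mulVec, Matrix.mul_sub, h3,
    ← Matrix.mul_assoc, h3]
  simp

/-- The two summands of `z` lie in the column space of `A` and in its orthogonal complement, so
their squared norms add up to `Mfac`. -/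
lemma zvec_dotProduct_self {n : ℕ} {ι : Type*} [Fintype ι] [DecidableEq ι]
    (lam : ℝ) (b : ι → ℝ) (A : Matrix (Fin n) ι ℝ) (w : Fin n → ℝ)
    (hA : IsUnit (Aᵀ * A).det) :
    zvec lam b A w ⬝ᵥ zvec lam b A w = Mfac lam b A w := by
  have h2 : Aᵀ * A * (Aᵀ * A)⁻¹ = 1 := Matrix.mul_nonsing_inv _ hA
  have h3 : Aᵀ * (A * (Aᵀ * A)⁻¹) = 1 := by rw [← Matrix.mul_assoc, h2]
  have hz : zvec lam b A w = A.mulVec ((Aᵀ * A)⁻¹.mulVec (lam • b)) +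
      (1 / (n : ℝ)) • ((1 : Matrix (Fin n) (Fin n) ℝ) - A * (Aᵀ * A)⁻¹ * Aᵀ).mulVec w := by
    unfold zvec
    rw [Matrix.mulVec_mulVec, ← Matrix.mulVec_smul, sub_eq_add_neg, ← Matrix.neg_mulVec, neg_sub]
  have h4 : ∀ c : ι → ℝ, A.mulVec c ⬝ᵥ zvec lam b A w = c ⬝ᵥ (lam • b) := by
    intro c
    rw [← transpose_mulVec_zvec lam b A w hA, Matrix.dotProduct_mulVec, Matrix.vecMul_transpose]
  have h5 : (1 - A * (Aᵀ * A)⁻¹ * Aᵀ).mulVec (zvec lam b A w) =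
      (1 / (n : ℝ)) • ((1 : Matrix (Fin n) (Fin n) ℝ) - A * (Aᵀ * A)⁻¹ * Aᵀ).mulVec w := by
    rw [Matrix.sub_mulVec, ← Matrix.mulVec_mulVec, transpose_mulVec_zvec lam b A w hA,
      ← Matrix.mulVec_mulVec, Matrix.one_mulVec]
    nth_rewrite 1 [hz]
    simp
  have hsym : (1 - A * (Aᵀ * A)⁻¹ * Aᵀ)ᵀ = 1 - A * (Aᵀ * A)⁻¹ * Aᵀ := by
    simp [Matrix.transpose_mul, Matrix.transpose_nonsing_inv, Matrix.mul_assoc]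
  nth_rewrite 1 [hz]
  rw [add_dotProduct, h4, smul_dotProduct,
    ← hsym, Matrix.mulVec_transpose, ← Matrix.dotProduct_mulVec, h5]
  unfold Mfac
  simp only [Matrix.mulVec_smul, smul_dotProduct, dotProduct_smul, smul_eq_mul]
  rw [dotProduct_comm b]
  ring

/-! ### Measurability of `z` -/

section Measurability

variable {α : Type*} [MeasurableSpace α]

lemma measurable_det {ι : Type*} [Fintype ι] [DecidableEq ι] {f : α → Matrix ι ι ℝ}
    (hf : ∀ i j, Measurable fun a => f a i j) : Measurable fun a => (f a).det := by
  simp_rw [Matrix.det_apply]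
  fun_prop

lemma measurable_inv {ι : Type*} [Fintype ι] [DecidableEq ι] {f : α → Matrix ι ι ℝ}
    (hf : ∀ i j, Measurable fun a => f a i j) (i j : ι) :
    Measurable fun a => (f a)⁻¹ i j := by
  simp_rw [Matrix.inv_def, Ring.inverse_eq_inv', Matrix.smul_apply, Matrix.adjugate_apply,
    smul_eq_mul]
  refine (measurable_det hf).inv.mul (measurable_det fun k l => ?_)
  simp only [Matrix.updateRow_apply]
  split_ifs
  · exact measurable_const
  · exact hf k l

lemma measurable_matmul {ι κ τ : Type*} [Fintype κ] {f : α → Matrix ι κ ℝ} {g : α → Matrix κ τ ℝ}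
    (hf : ∀ i j, Measurable fun a => f a i j) (hg : ∀ i j, Measurable fun a => g a i j)
    (i : ι) (j : τ) : Measurable fun a => (f a * g a) i j := by
  simp_rw [Matrix.mul_apply]
  fun_prop

lemma measurable_zvec {n : ℕ} {ι : Type*} [Fintype ι] [DecidableEq ι]
    (lam : ℝ) (b : ι → ℝ) {f : α → Matrix (Fin n) ι ℝ} {w : α → Fin n → ℝ}
    (hf : ∀ i j, Measurable fun a => f a i j) (hw : Measurable w) (k : Fin n) :
    Measurable fun a => zvec lam b (f a) (w a) k := by
  have ht : ∀ i j, Measurable fun a => (f a)ᵀ i j := fun i j => hf j i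
  have h1 := measurable_matmul hf (measurable_inv (measurable_matmul ht hf))
  have h2 := measurable_matmul h1 ht
  have h3 : ∀ i, Measurable fun a => w a i := fun i => (measurable_pi_apply i).comp hw
  refine Measurable.sub (f := fun a => ((f a * ((f a)ᵀ * f a)⁻¹).mulVec (lam • b)) k)
    (g := fun a => ((f a * ((f a)ᵀ * f a)⁻¹ * (f a)ᵀ - 1).mulVec ((1 / (n : ℝ)) • w a)) k) ?_ ?_
  · exact Finset.measurable_sum _ fun i _ => (h1 k i).mul measurable_const
  · simp only [Matrix.mulVec, dotProduct, Matrix.sub_apply, Pi.smul_apply, smul_eq_mul]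
    exact Finset.measurable_sum _ fun i _ =>
      ((h2 k i).sub measurable_const).mul ((h3 i).const_mul _)

end Measurability

/-! ### The conditional law of `V` -/

lemma abs_mulVec_sgn_le {ι κ : Type*} [Fintype ι] (B : Matrix κ ι ℝ) (j : κ) {r lam : ℝ}
    (hlam : 0 ≤ lam) (hB : ∑ i, |B j i| ≤ r) (b : ι → ℝ) (hb : ∀ i, |b i| ≤ 1) :
    |B.mulVec (lam • b) j| ≤ lam * r := by
  rw [Matrix.mulVec_smul, Pi.smul_apply, smul_eq_mul, abs_mul, abs_of_nonneg hlam]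
  gcongr
  refine (Finset.abs_sum_le_sum_abs _ _).trans (le_trans ?_ hB)
  refine Finset.sum_le_sum fun i _ => ?_
  rw [abs_mul]
  exact mul_le_of_le_one_right (abs_nonneg _) (hb i)

lemma abs_sgn_le_one (t : ℝ) : |sgn t| ≤ 1 := by
  unfold sgn
  split_ifs <;> simp

/-- Conditioned on `X_S` and `W`, the vector `(V_j)_{j ∈ S^c}` is Gaussian, with conditional
mean bounded in absolute value by `λ_n (1 - ε)` and conditional covariance `M_n • Σ_{(S^c|S)}`. -/
theorem conditional_law_V
    {Ω : Type*} [MeasurableSpace Ω] (P : Measure Ω) [IsProbabilityMeasure P]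
    (n p : ℕ) (Sfin : Finset (Fin p)) (hs1 : 1 ≤ Sfin.card) (hsn : Sfin.card < n)
    (Sig : Matrix (Fin p) (Fin p) ℝ) (hpd : Sig.PosDef)
    (ε : ℝ) (hε : 0 < ε) (hε1 : ε ≤ 1)
    (hinc : ∀ j : {i : Fin p // i ∉ Sfin},
      ∑ i : {i : Fin p // i ∈ Sfin},
        |(Sig.submatrix (Subtype.val : {i : Fin p // i ∉ Sfin} → Fin p)
              (Subtype.val : {i : Fin p // i ∈ Sfin} → Fin p) *
            (Sig.submatrix (Subtype.val : {i : Fin p // i ∈ Sfin} → Fin p)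
              (Subtype.val : {i : Fin p // i ∈ Sfin} → Fin p))⁻¹) j i| ≤ 1 - ε)
    (X : Ω → Fin n → Fin p → ℝ) (hXmeas : Measurable X)
    (hXlaw : HasIIDGaussianRows P X Sig)
    (σ2 : ℝ) (hσ2 : 0 < σ2)
    (W : Ω → Fin n → ℝ) (hWmeas : Measurable W)
    (hWlaw : Measure.map W P = Measure.pi (fun _ : Fin n => gaussianReal 0 σ2.toNNReal))
    (hindep : IndepFun X W P)
    (lam : ℝ) (hlam : 0 < lam)
    (βstar : Fin p → ℝ) (hsupp : ∀ i, i ∈ Sfin ↔ βstar i ≠ 0)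
    (b : {i : Fin p // i ∈ Sfin} → ℝ) (hb : ∀ i, b i = sgn (βstar i.1))
    (XS : Ω → Fin n → {i : Fin p // i ∈ Sfin} → ℝ)
    (hXS : ∀ ω k i, XS ω k i = X ω k i.1)
    (XSc : Ω → Fin n → {j : Fin p // j ∉ Sfin} → ℝ)
    (hXSc : ∀ ω k j, XSc ω k j = X ω k j.1)
    (V : Ω → {j : Fin p // j ∉ Sfin} → ℝ)
    (hV : ∀ ω, V ω =
      (Matrix.of (XSc ω))ᵀ.mulVec
        (((Matrix.of (XS ω) * ((Matrix.of (XS ω))ᵀ * Matrix.of (XS ω))⁻¹).mulVec (lam • b)) -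
          ((Matrix.of (XS ω) * ((Matrix.of (XS ω))ᵀ * Matrix.of (XS ω))⁻¹ *
              (Matrix.of (XS ω))ᵀ - 1).mulVec ((1 / (n : ℝ)) • W ω)))) :
    ∀ᵐ ω ∂P, ∃ m : {j : Fin p // j ∉ Sfin} → ℝ,
      (∀ j, |m j| ≤ lam * (1 - ε)) ∧
      IsGaussianMeanCov
        (condDistrib V (fun ω' => (XS ω', W ω')) P (XS ω, W ω)) m
        (Mfac lam b (Matrix.of (XS ω)) (W ω) •
          (Sig.submatrix (Subtype.val : {i : Fin p // i ∉ Sfin} → Fin p)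
              (Subtype.val : {i : Fin p // i ∉ Sfin} → Fin p) -
            Sig.submatrix (Subtype.val : {i : Fin p // i ∉ Sfin} → Fin p)
                (Subtype.val : {i : Fin p // i ∈ Sfin} → Fin p) *
              (Sig.submatrix (Subtype.val : {i : Fin p // i ∈ Sfin} → Fin p)
                  (Subtype.val : {i : Fin p // i ∈ Sfin} → Fin p))⁻¹ *
              Sig.submatrix (Subtype.val : {i : Fin p // i ∈ Sfin} → Fin p)
                (Subtype.val : {i : Fin p // i ∉ Sfin} → Fin p))) := by
  obtain ⟨ρ, ⟨A0, hA0, hρ⟩, hX⟩ := hXlaw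
  have hρ' : ρ = linGauss A0 := by rw [hρ]; simp [linGauss]
  obtain ⟨L, D, hL, hD, hsplit⟩ := row_split Sfin Sig hpd A0 hA0
  rw [← hD]
  set B := Sig.submatrix (Subtype.val : {i : Fin p // i ∉ Sfin} → Fin p)
      (Subtype.val : {i : Fin p // i ∈ Sfin} → Fin p) *
    (Sig.submatrix (Subtype.val : {i : Fin p // i ∈ Sfin} → Fin p)
      (Subtype.val : {i : Fin p // i ∈ Sfin} → Fin p))⁻¹ with hB
  have hXSe : XS = fun ω k i => X ω k i.1 := by funext ω k i; exact hXS ω k i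
  -- `E` collects the residuals of the regression of the columns in `S^c` on those in `S`.
  let E : Ω → Fin n → {j : Fin p // j ∉ Sfin} → ℝ :=
    fun ω k j => X ω k j.1 - B.mulVec (XS ω k) j
  have hmB := measurable_mulVec B
  have hXSm : Measurable XS := by rw [hXSe]; fun_prop
  have hf1 : Measurable (fun (x : Fin p → ℝ) (i : {i : Fin p // i ∈ Sfin}) => x i.1) := by
    fun_prop
  have hg1 : Measurable (fun (x : Fin p → ℝ) (j : {i : Fin p // i ∉ Sfin}) => x j.1 -
      B.mulVec (fun i : {i : Fin p // i ∈ Sfin} => x i.1) j) := by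
    refine measurable_pi_lambda _ fun j => ?_
    exact (measurable_pi_apply _).sub ((measurable_pi_apply j).comp (hmB.comp hf1))
  have hXSE : P.map (fun ω => (XS ω, E ω)) =
      (Measure.pi fun _ : Fin n => linGauss L).prod (Measure.pi fun _ : Fin n => linGauss D) := by
    rw [← rows_split (linGauss A0) (linGauss L) (linGauss D) _ _ hf1 hg1 hsplit, ← hρ', ← hX,
      Measure.map_map (by fun_prop) hXmeas]
    congr 1
    funext ω
    simp only [Function.comp, E, hXSe]
  have hEm : Measurable E := by
    have : E = (fun (x : Fin n → Fin p → ℝ) (k : Fin n) => (fun (x : Fin p → ℝ)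
        (j : {i : Fin p // i ∉ Sfin}) => x j.1 -
      B.mulVec (fun i : {i : Fin p // i ∈ Sfin} => x i.1) j) (x k)) ∘ X := by
      funext ω
      simp only [Function.comp, E, hXSe]
    rw [this]
    exact Measurable.comp (by fun_prop) hXmeas
  have hXSlaw : P.map XS = Measure.pi fun _ : Fin n => linGauss L := by
    have := congrArg Measure.fst hXSE
    rwa [Measure.fst_prod, Measure.fst_map_prodMk hEm] at this
  have hElaw : P.map E = Measure.pi fun _ : Fin n => linGauss D := by
    have := congrArg Measure.snd hXSE
    rwa [Measure.snd_prod, Measure.snd_map_prodMk hXSm] at this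
  have hWprob : IsProbabilityMeasure (P.map W) :=
    Measure.isProbabilityMeasure_map hWmeas.aemeasurable
  -- `(X_S, E)` is a function of `X`, hence independent of `W`.
  have hindXSE : IndepFun (fun ω => (XS ω, E ω)) W P := by
    have : (fun ω => (XS ω, E ω)) = (fun x : Fin n → Fin p → ℝ =>
        ((fun k i => x k i.1 : Fin n → {i : Fin p // i ∈ Sfin} → ℝ),
          (fun k => (fun (x : Fin p → ℝ) (j : {i : Fin p // i ∉ Sfin}) => x j.1 -
            B.mulVec (fun i : {i : Fin p // i ∈ Sfin} => x i.1) j) (x k)))) ∘ X := by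
      funext ω
      simp only [Function.comp, E, hXSe]
    rw [this]
    exact hindep.comp (ψ := id) (by fun_prop) measurable_id
  have hindXSW : IndepFun XS W P := hindXSE.comp (φ := Prod.fst) measurable_fst measurable_id
  have hjoint : P.map (fun ω => ((XS ω, W ω), E ω)) =
      (P.map (fun ω => (XS ω, W ω))).prod (P.map E) := by
    have h1 := hindXSE.map_prod_eq_prod_map_map (hXSm.prodMk hEm).aemeasurable hWmeas.aemeasurable
    have h2 := hindXSW.map_prod_eq_prod_map_map hXSm.aemeasurable hWmeas.aemeasurable
    rw [h2, hXSlaw, hElaw, ← prod_rearrange, ← hXSE, ← h1, Measure.map_map (by fun_prop)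
      ((hXSm.prodMk hEm).prodMk hWmeas)]
    rfl
  let Φ : ((Fin n → {i : Fin p // i ∈ Sfin} → ℝ) × (Fin n → ℝ)) ×
      (Fin n → {j : Fin p // j ∉ Sfin} → ℝ) → {j : Fin p // j ∉ Sfin} → ℝ :=
    fun q => B.mulVec ((Matrix.of q.1.1)ᵀ.mulVec (zvec lam b (Matrix.of q.1.1) q.1.2)) +
      ∑ k, zvec lam b (Matrix.of q.1.1) q.1.2 k • q.2 k
  have hzm : ∀ k, Measurable fun q : ((Fin n → {i : Fin p // i ∈ Sfin} → ℝ) × (Fin n → ℝ)) ×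
      (Fin n → {j : Fin p // j ∉ Sfin} → ℝ) => zvec lam b (Matrix.of q.1.1) q.1.2 k := by
    refine measurable_zvec lam b (fun i j => ?_) (by fun_prop)
    simp only [Matrix.of_apply]
    fun_prop
  have hΦm : Measurable Φ := by
    refine Measurable.add (hmB.comp (measurable_pi_lambda _ fun i => ?_)) (by fun_prop)
    simp only [Matrix.mulVec, dotProduct, Matrix.transpose_apply, Matrix.of_apply]
    fun_prop
  have hVΦ : V = fun ω => Φ ((XS ω, W ω), E ω) := by
    funext ω
    rw [hV ω]
    change (Matrix.of (XSc ω))ᵀ.mulVec (zvec lam b (Matrix.of (XS ω)) (W ω)) = _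
    have hdec : (Matrix.of (XSc ω))ᵀ = B * (Matrix.of (XS ω))ᵀ + (Matrix.of (E ω))ᵀ := by
      ext j k
      simp [E, hXSc, Matrix.mul_apply, Matrix.mulVec, dotProduct]
    rw [hdec, Matrix.add_mulVec, ← Matrix.mulVec_mulVec]
    simp only [Φ]
    congr 1
    ext j
    simp [Matrix.mulVec, dotProduct, mul_comm]
  have hcond := ae_of_ae_map (hXSm.prodMk hWmeas).aemeasurable
    (condDistrib_of_indep P (fun ω => (XS ω, W ω)) (hXSm.prodMk hWmeas) E hEm hjoint Φ hΦm)
  have hLpd : (L * Lᵀ).PosDef := by rw [hL]; exact hpd.submatrix Subtype.val_injective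
  -- Off the event that the Gram matrix is singular, where `⁻¹` is `0`, `X_Sᵀ z` is `λ b`.
  have hgram := ae_isUnit_gram (n := n) (linGauss L)
    (fun q hq => linGauss_submodule L hLpd q hq) (by simpa using hsn.le)
  rw [← hXSlaw] at hgram
  filter_upwards [hcond, ae_of_ae_map hXSm.aemeasurable hgram] with ω h1 h2
  refine ⟨B.mulVec (lam • b), fun j => ?_, ?_⟩
  · exact abs_mulVec_sgn_le B j hlam.le (hinc j) b fun i => by rw [hb]; exact abs_sgn_le_one _
  · rw [hVΦ, h1, hElaw, ← zvec_dotProduct_self lam b _ (W ω) h2]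
    simp only [Φ, transpose_mulVec_zvec lam b _ (W ω) h2]
    exact isGaussianMeanCov_comb D _ _
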